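/- Fix 1 < p < ∞, λ > 0, and κ ≤ 0. For a ∈ ℝ let w_a : ℝ → ℝ denote the unique C¹ solution with t ↦ |w_a′(t)|^{p-2} w_a′(t) C¹ of the equation (e^{-κ t²/2} |w_a′|^{p-2} w_a′)′ = -λ e^{-κ t²/2} |w_a|^{p-2} w_a on ℝ with w_a(a) = -1 and w_a′(a) = 0. If a_n → a in ℝ, then w_{a_n} → w_a and w_{a_n}′ → w_a′ uniformly on every compact subset of ℝ. -/

import Mathlib

/-- The odd power function `sgnPow q x = sign x * |x| ^ q` (with value `0` at `0`);
for `q = p - 1` this is the function usually written `|x|^{p-2} x`. -/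
noncomputable def sgnPow (q x : ℝ) : ℝ := Real.sign x * |x| ^ q

/-- `w` solves the one-dimensional model IVP with initial point `a`. -/
def IsModelSolution (p lam κ a : ℝ) (w : ℝ → ℝ) : Prop :=
  ContDiff ℝ 1 w ∧
  ContDiff ℝ 1 (fun t => sgnPow (p - 1) (deriv w t)) ∧
  (∀ t : ℝ, HasDerivAt (fun s => Real.exp (-κ * s ^ 2 / 2) * sgnPow (p - 1) (deriv w s))
      (-lam * (Real.exp (-κ * t ^ 2 / 2) * sgnPow (p - 1) (w t))) t) ∧
  w a = -1 ∧ deriv w a = 0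

open Set Filter Topology MeasureTheory

/-! ### Elementary facts about the odd power -/

lemma sgnPow_of_nonneg {q x : ℝ} (hq : 0 < q) (hx : 0 ≤ x) : sgnPow q x = x ^ q := by
  rcases hx.eq_or_lt with rfl | hx
  · simp [sgnPow, Real.zero_rpow hq.ne']
  · simp [sgnPow, Real.sign_of_pos hx, abs_of_pos hx]

lemma sgnPow_neg (q x : ℝ) : sgnPow q (-x) = -sgnPow q x := by
  simp [sgnPow, Real.sign_neg]

lemma sgnPow_of_nonpos {q x : ℝ} (hq : 0 < q) (hx : x ≤ 0) : sgnPow q x = -(-x) ^ q := by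
  rw [← sgnPow_of_nonneg hq (neg_nonneg.2 hx), sgnPow_neg, neg_neg]

lemma continuous_sgnPow {q : ℝ} (hq : 0 < q) : Continuous (sgnPow q) := by
  have h : sgnPow q = fun x => (max x 0) ^ q - (max (-x) 0) ^ q := by
    funext x
    rcases le_total 0 x with hx | hx
    · simp [sgnPow_of_nonneg hq hx, hx, Real.zero_rpow hq.ne']
    · simp [sgnPow_of_nonpos hq hx, hx, Real.zero_rpow hq.ne']
  rw [h]
  exact ((continuous_id.max continuous_const).rpow_const fun _ => Or.inr hq.le).sub
    ((continuous_neg.max continuous_const).rpow_const fun _ => Or.inr hq.le)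

lemma sgnPow_eq_zero_iff {q x : ℝ} : sgnPow q x = 0 ↔ x = 0 := by
  constructor
  · intro h
    by_contra hx
    rcases mul_eq_zero.1 h with h | h
    · exact hx (Real.sign_eq_zero_iff.1 h)
    · exact (Real.rpow_pos_of_pos (abs_pos.2 hx) q).ne' h
  · rintro rfl
    simp [sgnPow]

lemma mul_sgnPow {q : ℝ} (hq : 0 < q) (x : ℝ) : x * sgnPow q x = |x| ^ (q + 1) := by
  rcases le_total 0 x with hx | hx
  · rw [sgnPow_of_nonneg hq hx, abs_of_nonneg hx, Real.rpow_add_one' hx (by linarith)]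
    ring
  · rw [sgnPow_of_nonpos hq hx, abs_of_nonpos hx,
      Real.rpow_add_one' (neg_nonneg.2 hx) (by linarith)]
    ring

lemma sgnPow_sgnPow {q r : ℝ} (hq : 0 < q) (hr : 0 < r) (x : ℝ) :
    sgnPow r (sgnPow q x) = sgnPow (q * r) x := by
  rcases le_total 0 x with hx | hx
  · rw [sgnPow_of_nonneg hq hx, sgnPow_of_nonneg hr (by positivity),
      sgnPow_of_nonneg (mul_pos hq hr) hx, Real.rpow_mul hx]
  · have hx' := neg_nonneg.2 hx
    rw [sgnPow_of_nonpos hq hx, sgnPow_neg, sgnPow_of_nonneg hr (by positivity),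
      sgnPow_of_nonpos (mul_pos hq hr) hx, Real.rpow_mul hx']

lemma sgnPow_one (x : ℝ) : sgnPow 1 x = x := by
  rcases le_total 0 x with hx | hx
  · simp [sgnPow_of_nonneg one_pos hx]
  · simp [sgnPow_of_nonpos one_pos hx]

lemma hasDerivAt_abs_rpow_add_one {q : ℝ} (hq : 0 < q) (x : ℝ) :
    HasDerivAt (fun y : ℝ => |y| ^ (q + 1)) ((q + 1) * sgnPow q x) x := by
  convert hasDerivAt_abs_rpow x (p := q + 1) (by linarith) using 1
  rw [mul_assoc]
  congr 1
  rcases eq_or_ne x 0 with rfl | hx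
  · simp [sgnPow]
  · have h : |x| ^ q = |x| ^ (q + 1 - 2) * |x| := by
      rw [← Real.rpow_add_one (abs_pos.2 hx).ne']
      ring_nf
    rw [sgnPow, h]
    rcases hx.lt_or_gt with hx | hx
    · rw [Real.sign_of_neg hx, abs_of_neg hx]
      ring
    · rw [Real.sign_of_pos hx, abs_of_pos hx]
      ring

lemma abs_rpow_sub_rpow_le {q M x y : ℝ} (hq : 0 < q) (hx : 0 < x) (hy : 0 ≤ y)
    (hxM : x ≤ M) (hyM : y ≤ M) :
    |x ^ q - y ^ q| ≤ (1 + q * M ^ (q - 1)) * (1 + x ^ (q - 1)) * |x - y| := by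
  have hM : 0 ≤ M := hx.le.trans hxM
  have hMq : 0 ≤ M ^ (q - 1) := Real.rpow_nonneg hM _
  have hxq : 0 < x ^ (q - 1) := Real.rpow_pos_of_pos hx _
  rcases le_total q 1 with h1 | h1
  · have key : |x ^ q - y ^ q| ≤ x ^ (q - 1) * |x - y| := by
      have e1 : x ^ q = x ^ (q - 1) * x := by
        rw [← Real.rpow_add_one hx.ne']
        ring_nf
      rcases hy.eq_or_lt with rfl | hy
      · rw [Real.zero_rpow hq.ne', sub_zero, sub_zero, e1, abs_mul, abs_of_pos hxq]
      have e2 : y ^ q = y ^ (q - 1) * y := by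
        rw [← Real.rpow_add_one hy.ne']
        ring_nf
      rcases le_total y x with hyx | hyx
      · have h2 : y ^ q ≤ x ^ q := Real.rpow_le_rpow hy.le hyx hq.le
        have h3 : x ^ (q - 1) ≤ y ^ (q - 1) :=
          Real.rpow_le_rpow_of_nonpos hy hyx (by linarith)
        rw [abs_of_nonneg (by linarith), abs_of_nonneg (by linarith)]
        nlinarith
      · have h2 : x ^ q ≤ y ^ q := Real.rpow_le_rpow hx.le hyx hq.le
        have h3 : y ^ (q - 1) ≤ x ^ (q - 1) :=
          Real.rpow_le_rpow_of_nonpos hx hyx (by linarith)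
        rw [abs_of_nonpos (by linarith), abs_of_nonpos (by linarith)]
        nlinarith
    refine key.trans (mul_le_mul_of_nonneg_right ?_ (abs_nonneg _))
    nlinarith [mul_nonneg hq.le hMq, mul_nonneg (mul_nonneg hq.le hMq) hxq.le]
  · have key : |x ^ q - y ^ q| ≤ q * M ^ (q - 1) * |x - y| := by
      have := (convex_Icc 0 M).norm_image_sub_le_of_norm_hasDerivWithin_le
        (f := fun t : ℝ => t ^ q) (f' := fun t => q * t ^ (q - 1)) (C := q * M ^ (q - 1))
        (x := y) (y := x)
        (fun t _ => (Real.hasDerivAt_rpow_const (Or.inr h1)).hasDerivWithinAt) ?_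
        ⟨hy, hyM⟩ ⟨hx.le, hxM⟩
      · simpa [Real.norm_eq_abs] using this
      · intro t ht
        have : 0 ≤ t ^ (q - 1) := Real.rpow_nonneg ht.1 _
        rw [Real.norm_eq_abs, abs_of_nonneg (by positivity)]
        exact mul_le_mul_of_nonneg_left
          (Real.rpow_le_rpow ht.1 ht.2 (by linarith)) hq.le
    refine key.trans (mul_le_mul_of_nonneg_right ?_ (abs_nonneg _))
    nlinarith [mul_nonneg hq.le hMq, mul_nonneg (mul_nonneg hq.le hMq) hxq.le]

/-- A Lipschitz type estimate for the odd power whose constant is singular only in the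
first argument. -/
lemma abs_sgnPow_sub_le {q M x y : ℝ} (hq : 0 < q) (hx : x ≠ 0) (hxM : |x| ≤ M)
    (hyM : |y| ≤ M) :
    |sgnPow q x - sgnPow q y| ≤
      (3 + q * M ^ (q - 1)) * (1 + |x| ^ (q - 1)) * |x - y| := by
  wlog hpos : 0 < x generalizing x y
  · have := this (x := -x) (y := -y) (neg_ne_zero.2 hx) (by simpa using hxM)
      (by simpa using hyM) (neg_pos.2 (lt_of_le_of_ne (not_lt.1 hpos) hx))
    rw [sgnPow_neg, sgnPow_neg, abs_neg] at this
    rw [abs_sub_comm, abs_sub_comm x]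
    convert this using 2 <;> ring_nf
  rw [abs_of_pos hpos] at hxM ⊢
  have hM : 0 ≤ M := hpos.le.trans hxM
  have hMq : 0 ≤ q * M ^ (q - 1) := mul_nonneg hq.le (Real.rpow_nonneg hM _)
  have hxq : 0 < x ^ (q - 1) := Real.rpow_pos_of_pos hpos _
  rw [sgnPow_of_nonneg hq hpos.le]
  rcases le_total 0 y with hy | hy
  · rw [sgnPow_of_nonneg hq hy]
    rw [abs_of_nonneg hy] at hyM
    refine (abs_rpow_sub_rpow_le hq hpos hy hxM hyM).trans ?_
    gcongr
    norm_num
  · rw [sgnPow_of_nonpos hq hy]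
    rw [abs_of_nonpos hy] at hyM
    have hy' : 0 ≤ -y := neg_nonneg.2 hy
    have h := abs_rpow_sub_rpow_le hq hpos hy' hxM hyM
    have e1 : x ^ q = x ^ (q - 1) * x := by
      rw [← Real.rpow_add_one hpos.ne']
      ring_nf
    have h1 : |x - -y| ≤ x - y := abs_le.2 ⟨by linarith, by linarith⟩
    have h2 := (neg_abs_le (x ^ q - (-y) ^ q))
    have h3 : 0 ≤ (-y) ^ q := Real.rpow_nonneg hy' q
    have h4 : (1 + q * M ^ (q - 1)) * (1 + x ^ (q - 1)) * |x - -y| ≤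
        (1 + q * M ^ (q - 1)) * (1 + x ^ (q - 1)) * (x - y) := by gcongr
    rw [abs_of_nonneg (a := x - y) (by linarith),
      abs_of_nonneg (a := x ^ q - -(-y) ^ q) (by rw [sub_neg_eq_add]; positivity)]
    nlinarith [mul_nonneg hxq.le hy', mul_nonneg hxq.le hpos.le]

/-! ### Integrable singular weights and a Gronwall inequality -/

lemma intervalIntegrable_abs_rpow {r : ℝ} (hr : -1 < r) (a b : ℝ) :
    IntervalIntegrable (fun x : ℝ => |x| ^ r) volume a b := by
  refine intervalIntegrable_of_even (fun x => by simp) (fun x hx => ?_)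
  refine (intervalIntegral.intervalIntegrable_rpow' hr).congr fun y hy => ?_
  rw [uIoc_of_le hx.le] at hy
  simp [abs_of_pos hy.1]

lemma countable_zeros_of_hasDerivAt_ne_zero {f f' : ℝ → ℝ} (hf : ∀ t, HasDerivAt f (f' t) t)
    (h0 : ∀ t, f t = 0 → f' t ≠ 0) : {t | f t = 0}.Countable := by
  refine (HereditarilyLindelofSpace.isLindelof _).countable_of_isDiscrete
    (isDiscrete_iff_nhdsNE.2 fun x hx => ?_)
  have h := (hf x).eventually_ne (c := 0) (h0 x hx)
  rw [← disjoint_iff, Filter.disjoint_principal_right]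
  exact h

lemma locallyIntegrable_abs_rpow_comp {f f' : ℝ → ℝ} {r : ℝ} (hr : -1 < r)
    (hf : ∀ t, HasDerivAt f (f' t) t) (h0 : ∀ t, f t = 0 → f' t ≠ 0) :
    LocallyIntegrable (fun t => |f t| ^ r) := by
  have hcont : Continuous f := continuous_iff_continuousAt.2 fun t => (hf t).continuousAt
  have hmeas : Measurable fun t => |f t| ^ r := by
    have := hcont.measurable
    fun_prop
  rcases le_or_gt 0 r with hr0 | hr0
  · exact (hcont.abs.rpow_const fun _ => Or.inr hr0).locallyIntegrable
  intro x
  by_cases hx : f x = 0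
  · obtain ⟨c, hc, hb⟩ := ((hf x).isTheta_sub (h0 x hx)).isBigO_symm.exists_pos
    rw [Asymptotics.isBigOWith_iff, prod_pure, eventually_map] at hb
    simp only [hx, sub_zero] at hb
    obtain ⟨ε, hε, hball⟩ := Metric.eventually_nhds_iff_ball.1 hb
    refine ⟨Metric.ball x ε, Metric.ball_mem_nhds x hε, ?_⟩
    have hg : IntegrableOn (fun y => (c ^ r)⁻¹ * |y - x| ^ r) (Metric.ball x ε) := by
      have h1 := ((intervalIntegrable_abs_rpow hr (-ε) ε).comp_sub_right x).const_mul (c ^ r)⁻¹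
      rw [intervalIntegrable_iff_integrableOn_Ioo_of_le (by linarith)] at h1
      rwa [Real.ball_eq_Ioo, sub_eq_neg_add, add_comm x]
    refine hg.mono' hmeas.aestronglyMeasurable ?_
    filter_upwards [ae_restrict_mem Metric.isOpen_ball.measurableSet] with y hy
    rw [Real.norm_eq_abs, abs_of_nonneg (Real.rpow_nonneg (abs_nonneg _) r)]
    rcases eq_or_ne y x with rfl | hyx
    · simp [hx, Real.zero_rpow hr0.ne]
    · have hpos : 0 < |y - x| := abs_pos.2 (sub_ne_zero.2 hyx)
      have hle : |y - x| ≤ c * |f y| := hball y hy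
      calc |f y| ^ r ≤ (|y - x| / c) ^ r :=
            Real.rpow_le_rpow_of_nonpos (by positivity)
              ((div_le_iff₀ hc).2 (by linarith)) hr0.le
        _ = (c ^ r)⁻¹ * |y - x| ^ r := by
            rw [Real.div_rpow hpos.le hc.le, div_eq_inv_mul]
  · have hca : ContinuousAt (fun t => |f t| ^ r) x :=
      hcont.continuousAt.abs.rpow_const (Or.inl (abs_ne_zero.2 hx))
    exact (volume.finiteAt_nhds x).integrableAtFilter_of_tendsto
      hmeas.stronglyMeasurable.stronglyMeasurableAtFilter hca

/-- A Gronwall inequality for a weight `m` that is merely locally integrable. -/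
lemma mul_exp_integral_le {e e' m : ℝ → ℝ} {x y c : ℝ} {S : Set ℝ} (hxy : x ≤ y)
    (hS : S.Countable) (he : ∀ t, HasDerivAt e (e' t) t) (hce' : Continuous e')
    (hm : LocallyIntegrable m) (hcm : ∀ t, t ∉ S → ContinuousAt m t)
    (hle : ∀ t ∈ Icc x y, t ∉ S → 0 ≤ c * (e' t + c * m t * e t)) :
    c * e x ≤ c * (e y * Real.exp (c * ∫ t in x..y, m t)) := by
  have hmi : ∀ a b, IntervalIntegrable m volume a b := fun a b =>
    (hm.integrableOn_isCompact isCompact_uIcc).intervalIntegrable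
  have hce : Continuous e := continuous_iff_continuousAt.2 fun t => (he t).continuousAt
  set P : ℝ → ℝ := fun s => ∫ t in x..s, m t with hP
  have hcP : Continuous P := intervalIntegral.continuous_primitive hmi x
  have hcE : Continuous fun s => Real.exp (c * P s) := by fun_prop
  have hint : IntervalIntegrable (fun s => c * (e' s + c * m s * e s) * Real.exp (c * P s))
      volume x y := by
    refine IntervalIntegrable.mul_continuousOn ?_ hcE.continuousOn
    refine IntervalIntegrable.const_mul ((hce'.intervalIntegrable x y).add ?_) c
    exact ((hmi x y).const_mul c).mul_continuousOn hce.continuousOn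
  have hFTC := integral_eq_of_hasDerivAt_off_countable_of_le
    (fun s => c * (e s * Real.exp (c * P s))) _ hxy hS (by fun_prop) (fun t ht => ?_) hint
  · have hnn : 0 ≤ ∫ s in x..y, c * (e' s + c * m s * e s) * Real.exp (c * P s) := by
      refine intervalIntegral.integral_nonneg_of_ae_restrict hxy ?_
      have h1 : ∀ᵐ t ∂(volume.restrict (Icc x y)), t ∉ S :=
        ae_restrict_of_ae (hS.ae_notMem volume)
      filter_upwards [h1, ae_restrict_mem measurableSet_Icc] with t ht htI
      exact mul_nonneg (hle t htI ht) (Real.exp_pos _).le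
    rw [hFTC] at hnn
    have hx0 : P x = 0 := by simp [hP]
    simp only [hx0, mul_zero, Real.exp_zero, mul_one] at hnn
    linarith
  · have hPd : HasDerivAt P (m t) t := intervalIntegral.integral_hasDerivAt_right (hmi x t)
      (hm.aestronglyMeasurable.stronglyMeasurableAtFilter) (hcm t ht.2)
    refine (((he t).mul ((hPd.const_mul c).exp)).const_mul c).congr_deriv ?_
    ring

lemma gronwall_locallyIntegrable {e e' m : ℝ → ℝ} {A B : ℝ} {S : Set ℝ}
    (hS : S.Countable) (he : ∀ t, HasDerivAt e (e' t) t) (hce' : Continuous e')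
    (hm : LocallyIntegrable m) (hm0 : ∀ t, 0 ≤ m t)
    (hcm : ∀ t, t ∉ S → ContinuousAt m t) (he0 : ∀ t, 0 ≤ e t)
    (hle : ∀ t ∈ Icc A B, t ∉ S → |e' t| ≤ m t * e t)
    {s t : ℝ} (hs : s ∈ Icc A B) (ht : t ∈ Icc A B) :
    e t ≤ e s * Real.exp (∫ τ in A..B, m τ) := by
  have hmi : ∀ a b, IntervalIntegrable m volume a b := fun a b =>
    (hm.integrableOn_isCompact isCompact_uIcc).intervalIntegrable
  have hsub : ∀ {x y}, x ∈ Icc A B → y ∈ Icc A B → x ≤ y →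
      Real.exp (∫ τ in x..y, m τ) ≤ Real.exp (∫ τ in A..B, m τ) := fun hx hy hxy =>
    Real.exp_le_exp.2 (intervalIntegral.integral_mono_interval hx.1 hxy hy.2
      (Eventually.of_forall hm0) (hmi A B))
  rcases le_total s t with h | h
  · have h1 := mul_exp_integral_le (c := -1) h hS he hce' hm hcm fun r hr hrS => by
      have := hle r ⟨hs.1.trans hr.1, hr.2.trans ht.2⟩ hrS
      have := le_abs_self (e' r)
      linarith
    have h2 : e t * Real.exp (-∫ τ in s..t, m τ) ≤ e s := by
      simp only [neg_mul, one_mul, neg_le_neg_iff] at h1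
      exact h1
    rw [Real.exp_neg, ← div_eq_mul_inv, div_le_iff₀ (Real.exp_pos _)] at h2
    exact h2.trans (mul_le_mul_of_nonneg_left (hsub hs ht h) (he0 s))
  · have h1 := mul_exp_integral_le (c := 1) h hS he hce' hm hcm fun r hr hrS => by
      have := hle r ⟨ht.1.trans hr.1, hr.2.trans hs.2⟩ hrS
      have := neg_abs_le (e' r)
      linarith
    simp only [one_mul] at h1
    exact h1.trans (mul_le_mul_of_nonneg_left (hsub ht hs h) (he0 s))

/-! ### The equivalent planar system -/

/-- The planar first order system satisfied by `w` and `u = |w'|^{s-1} w'`, where `s = p - 1`. -/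
def IsPlanarSolution (s lam κ : ℝ) (w u : ℝ → ℝ) : Prop :=
  (∀ t, HasDerivAt w (sgnPow s⁻¹ (u t)) t) ∧
    ∀ t, HasDerivAt u (κ * t * u t - lam * sgnPow s (w t)) t

lemma sgnPow_inv_sgnPow {s : ℝ} (hs : 0 < s) (x : ℝ) : sgnPow s⁻¹ (sgnPow s x) = x := by
  rw [sgnPow_sgnPow hs (inv_pos.2 hs), mul_inv_cancel₀ hs.ne', sgnPow_one]

lemma IsModelSolution.isPlanarSolution {p lam κ a : ℝ} {w : ℝ → ℝ} (hp : 1 < p)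
    (h : IsModelSolution p lam κ a w) :
    IsPlanarSolution (p - 1) lam κ w (fun t => sgnPow (p - 1) (deriv w t)) := by
  obtain ⟨hw, -, hd, -, -⟩ := h
  have hs : 0 < p - 1 := sub_pos.2 hp
  refine ⟨fun t => ?_, fun t => ?_⟩
  · rw [sgnPow_inv_sgnPow hs]
    exact (hw.differentiable one_ne_zero t).hasDerivAt
  · have hq : HasDerivAt (fun s : ℝ => κ * s ^ 2 / 2) (κ * t) t := by
      refine (((hasDerivAt_pow 2 t).const_mul κ).div_const 2).congr_deriv ?_
      simp
      ring
    have hprod := hq.exp.mul (hd t)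
    have hE : ∀ s : ℝ, Real.exp (κ * s ^ 2 / 2) * Real.exp (-κ * s ^ 2 / 2) = 1 := fun s => by
      rw [← Real.exp_add]
      ring_nf
      exact Real.exp_zero
    have hfun : ((fun s : ℝ => Real.exp (κ * s ^ 2 / 2)) * fun s =>
        Real.exp (-κ * s ^ 2 / 2) * sgnPow (p - 1) (deriv w s)) =
        fun s => sgnPow (p - 1) (deriv w s) := by
      funext s
      simp only [Pi.mul_apply]
      rw [← mul_assoc, hE, one_mul]
    rw [hfun] at hprod
    refine hprod.congr_deriv ?_
    linear_combination (κ * t * sgnPow (p - 1) (deriv w t) - lam * sgnPow (p - 1) (w t)) * hE t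

/-- The energy of the planar system. -/
noncomputable def planarEnergy (s lam : ℝ) (w u : ℝ → ℝ) (t : ℝ) : ℝ :=
  s * |u t| ^ (s⁻¹ + 1) + lam * |w t| ^ (s + 1)

namespace IsPlanarSolution

variable {s lam κ : ℝ} {w u : ℝ → ℝ}

lemma continuous_fst (h : IsPlanarSolution s lam κ w u) : Continuous w :=
  continuous_iff_continuousAt.2 fun t => (h.1 t).continuousAt

lemma continuous_snd (h : IsPlanarSolution s lam κ w u) : Continuous u :=
  continuous_iff_continuousAt.2 fun t => (h.2 t).continuousAt

lemma hasDerivAt_planarEnergy (hs : 0 < s) (h : IsPlanarSolution s lam κ w u) (t : ℝ) :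
    HasDerivAt (planarEnergy s lam w u) ((s + 1) * κ * t * |u t| ^ (s⁻¹ + 1)) t := by
  have h1 := ((hasDerivAt_abs_rpow_add_one (inv_pos.2 hs) (u t)).comp t (h.2 t)).const_mul s
  have h2 := ((hasDerivAt_abs_rpow_add_one hs (w t)).comp t (h.1 t)).const_mul lam
  refine (h1.add h2).congr_deriv ?_
  rw [← mul_sgnPow (inv_pos.2 hs)]
  field_simp
  ring

lemma planarEnergy_le (hs : 0 < s) (hlam : 0 < lam) (h : IsPlanarSolution s lam κ w u)
    {A B x y : ℝ} (hx : x ∈ Icc A B) (hy : y ∈ Icc A B) :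
    planarEnergy s lam w u y ≤ planarEnergy s lam w u x *
      Real.exp (∫ τ in A..B, (s + 1) / s * |κ| * |τ|) := by
  have hm : Continuous fun τ : ℝ => (s + 1) / s * |κ| * |τ| := by fun_prop
  have hs' := inv_pos.2 hs
  refine gronwall_locallyIntegrable (S := ∅) countable_empty
    (h.hasDerivAt_planarEnergy hs) ?_ hm.locallyIntegrable (fun t => by positivity)
    (fun t _ => hm.continuousAt) (fun t => ?_) (fun t _ _ => ?_) hx hy
  · exact (by fun_prop : Continuous fun t : ℝ => (s + 1) * κ * t).mul
      (h.continuous_snd.abs.rpow_const fun _ => Or.inr (by positivity))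
  · unfold planarEnergy
    positivity
  · have h1 : s * |u t| ^ (s⁻¹ + 1) ≤ planarEnergy s lam w u t :=
      le_add_of_nonneg_right (by positivity)
    rw [abs_mul, abs_mul, abs_mul, abs_of_pos (by positivity : 0 < s + 1),
      abs_of_nonneg (by positivity : 0 ≤ |u t| ^ (s⁻¹ + 1))]
    calc (s + 1) * |κ| * |t| * |u t| ^ (s⁻¹ + 1)
        = (s + 1) / s * |κ| * |t| * (s * |u t| ^ (s⁻¹ + 1)) := by field_simp
      _ ≤ _ := by gcongr

lemma planarEnergy_pos (hs : 0 < s) (hlam : 0 < lam) (h : IsPlanarSolution s lam κ w u)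
    {x : ℝ} (hx : 0 < planarEnergy s lam w u x) (t : ℝ) : 0 < planarEnergy s lam w u t := by
  have := h.planarEnergy_le hs hlam (A := min x t) (B := max x t) (x := t) (y := x)
    ⟨min_le_right _ _, le_max_right _ _⟩ ⟨min_le_left _ _, le_max_left _ _⟩
  exact pos_of_mul_pos_left (hx.trans_le this) (Real.exp_pos _).le

lemma le_one_add_rpow {x q : ℝ} (hx : 0 ≤ x) (hq : 0 < q) : x ≤ 1 + x ^ (q + 1) := by
  rcases le_total x 1 with h | h
  · linarith [Real.rpow_nonneg hx (q + 1)]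
  · have := Real.self_le_rpow_of_one_le h (by linarith : 1 ≤ q + 1)
    linarith

lemma abs_le_of_planarEnergy_le (hs : 0 < s) (hlam : 0 < lam) {t L : ℝ}
    (hL : planarEnergy s lam w u t ≤ L) :
    |w t| ≤ 1 + L / lam + L / s ∧ |u t| ≤ 1 + L / lam + L / s := by
  have hs' := inv_pos.2 hs
  have h1 : 0 ≤ s * |u t| ^ (s⁻¹ + 1) := by positivity
  have h2 : 0 ≤ lam * |w t| ^ (s + 1) := by positivity
  have hL' : s * |u t| ^ (s⁻¹ + 1) + lam * |w t| ^ (s + 1) ≤ L := hL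
  have hL0 : 0 ≤ L := by linarith
  have h3 : |w t| ^ (s + 1) ≤ L / lam := (le_div_iff₀ hlam).2 (by linarith)
  have h4 : |u t| ^ (s⁻¹ + 1) ≤ L / s := (le_div_iff₀ hs).2 (by linarith)
  have h5 := le_one_add_rpow (abs_nonneg (w t)) hs
  have h6 := le_one_add_rpow (abs_nonneg (u t)) hs'
  have h7 : 0 ≤ L / lam := by positivity
  have h8 : 0 ≤ L / s := by positivity
  constructor <;> linarith

/-- Two bounded solutions of the planar system, one of which is nontrivial, separate at most
by a constant factor on a compact interval. -/
lemma exists_sq_add_sq_le (hs : 0 < s) (hlam : 0 < lam) (h : IsPlanarSolution s lam κ w u)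
    (hpos : ∀ t, 0 < planarEnergy s lam w u t) {A B M : ℝ} (hM : 0 ≤ M)
    (hb : ∀ t ∈ Icc A B, |w t| ≤ M ∧ |u t| ≤ M) :
    ∃ C, ∀ w₂ u₂ : ℝ → ℝ, IsPlanarSolution s lam κ w₂ u₂ →
      (∀ t ∈ Icc A B, |w₂ t| ≤ M ∧ |u₂ t| ≤ M) → ∀ x ∈ Icc A B, ∀ y ∈ Icc A B,
        (w y - w₂ y) ^ 2 + (u y - u₂ y) ^ 2 ≤ ((w x - w₂ x) ^ 2 + (u x - u₂ x) ^ 2) * C := by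
  have hs' := inv_pos.2 hs
  have hMq : ∀ q : ℝ, 0 ≤ M ^ q := fun q => Real.rpow_nonneg hM q
  have hw0 : ∀ t, w t = 0 → sgnPow s⁻¹ (u t) ≠ 0 := fun t ht hu => by
    have := hpos t
    rw [sgnPow_eq_zero_iff] at hu
    simp [planarEnergy, ht, hu, Real.zero_rpow (by positivity : s⁻¹ + 1 ≠ 0),
      Real.zero_rpow (by positivity : s + 1 ≠ 0)] at this
  have hu0 : ∀ t, u t = 0 → κ * t * u t - lam * sgnPow s (w t) ≠ 0 := fun t ht hu => by
    rw [ht, mul_zero, zero_sub, neg_eq_zero, mul_eq_zero, sgnPow_eq_zero_iff] at hu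
    exact hw0 t (hu.resolve_left hlam.ne') (sgnPow_eq_zero_iff.2 ht)
  set c₁ : ℝ := 3 + s⁻¹ * M ^ (s⁻¹ - 1) with hc₁
  set c₂ : ℝ := 3 + s * M ^ (s - 1) with hc₂
  have hc₁0 : 0 ≤ c₁ := by have := hMq (s⁻¹ - 1); positivity
  have hc₂0 : 0 ≤ c₂ := by have := hMq (s - 1); positivity
  set m : ℝ → ℝ := fun t =>
    c₁ * (1 + |u t| ^ (s⁻¹ - 1)) + 2 * (|κ| * |t|) + lam * (c₂ * (1 + |w t| ^ (s - 1))) with hm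
  have hmint : LocallyIntegrable m := by
    have i1 := locallyIntegrable_abs_rpow_comp (by linarith : -1 < s⁻¹ - 1) h.2 hu0
    have i2 := locallyIntegrable_abs_rpow_comp (by linarith : -1 < s - 1) h.1 hw0
    have i3 : LocallyIntegrable (fun t : ℝ => 2 * (|κ| * |t|)) :=
      (by fun_prop : Continuous fun t : ℝ => 2 * (|κ| * |t|)).locallyIntegrable
    have i4 : LocallyIntegrable (fun _ : ℝ => (1 : ℝ)) := locallyIntegrable_const 1
    exact (((i4.add i1).smul c₁).add i3).add (((i4.add i2).smul c₂).smul lam)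
  refine ⟨Real.exp (∫ τ in A..B, m τ), fun w₂ u₂ h₂ hb₂ x hx y hy => ?_⟩
  refine gronwall_locallyIntegrable (e := fun t => (w t - w₂ t) ^ 2 + (u t - u₂ t) ^ 2)
    (e' := fun t => 2 * (w t - w₂ t) * (sgnPow s⁻¹ (u t) - sgnPow s⁻¹ (u₂ t)) +
      2 * (u t - u₂ t) * ((κ * t * u t - lam * sgnPow s (w t)) -
        (κ * t * u₂ t - lam * sgnPow s (w₂ t))))
    (m := m) (S := {t | w t = 0} ∪ {t | u t = 0})
    ((countable_zeros_of_hasDerivAt_ne_zero h.1 hw0).union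
      (countable_zeros_of_hasDerivAt_ne_zero h.2 hu0))
    (fun t => ?_) ?_ hmint (fun t => ?_) (fun t ht => ?_) (fun t => by positivity)
    (fun t ht htS => ?_) hx hy
  · refine ((((h.1 t).sub (h₂.1 t)).pow 2).add (((h.2 t).sub (h₂.2 t)).pow 2)).congr_deriv ?_
    simp
  · have := h.continuous_fst
    have := h.continuous_snd
    have := h₂.continuous_fst
    have := h₂.continuous_snd
    have := continuous_sgnPow hs
    have := continuous_sgnPow hs'
    fun_prop
  · positivity
  · simp only [mem_union, mem_ofPred_eq, not_or] at ht
    have k1 : ContinuousAt (fun t => |u t| ^ (s⁻¹ - 1)) t :=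
      h.continuous_snd.continuousAt.abs.rpow_const (Or.inl (abs_ne_zero.2 ht.2))
    have k2 : ContinuousAt (fun t => |w t| ^ (s - 1)) t :=
      h.continuous_fst.continuousAt.abs.rpow_const (Or.inl (abs_ne_zero.2 ht.1))
    fun_prop
  · simp only [mem_union, mem_ofPred_eq, not_or] at htS
    have b1 := abs_sgnPow_sub_le hs' htS.2 (hb t ht).2 (hb₂ t ht).2
    have b2 := abs_sgnPow_sub_le hs htS.1 (hb t ht).1 (hb₂ t ht).1
    rw [← hc₁] at b1
    rw [← hc₂] at b2
    set X := w t - w₂ t with hX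
    set Y := u t - u₂ t with hY
    set P := c₁ * (1 + |u t| ^ (s⁻¹ - 1)) with hP
    set Q := c₂ * (1 + |w t| ^ (s - 1)) with hQ
    have hP0 : 0 ≤ P := by positivity
    have hQ0 : 0 ≤ Q := by positivity
    set D₁ := sgnPow s⁻¹ (u t) - sgnPow s⁻¹ (u₂ t) with hD₁
    set D₂ := sgnPow s (w t) - sgnPow s (w₂ t) with hD₂
    have hXY : 2 * (|X| * |Y|) ≤ X ^ 2 + Y ^ 2 := by
      have := two_mul_le_add_sq |X| |Y|
      rw [sq_abs, sq_abs] at this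
      linarith
    have hsplit : 2 * X * D₁ + 2 * Y * ((κ * t * u t - lam * sgnPow s (w t)) -
        (κ * t * u₂ t - lam * sgnPow s (w₂ t))) =
        2 * X * D₁ + 2 * (κ * t) * Y ^ 2 - lam * (2 * Y * D₂) := by
      rw [hD₂, hY]
      ring
    have t1 : |2 * X * D₁| ≤ P * (X ^ 2 + Y ^ 2) := by
      rw [abs_mul, abs_mul, abs_two]
      calc 2 * |X| * |D₁| ≤ 2 * |X| * (P * |Y|) := by gcongr
        _ = P * (2 * (|X| * |Y|)) := by ring
        _ ≤ _ := by gcongr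
    have t2 : |2 * Y * D₂| ≤ Q * (X ^ 2 + Y ^ 2) := by
      rw [abs_mul, abs_mul, abs_two]
      calc 2 * |Y| * |D₂| ≤ 2 * |Y| * (Q * |X|) := by gcongr
        _ = Q * (2 * (|X| * |Y|)) := by ring
        _ ≤ _ := by gcongr
    have t3 : |2 * (κ * t) * Y ^ 2| ≤ 2 * (|κ| * |t|) * (X ^ 2 + Y ^ 2) := by
      rw [abs_mul, abs_mul, abs_mul, abs_two, abs_of_nonneg (sq_nonneg Y)]
      gcongr
      exact le_add_of_nonneg_left (sq_nonneg X)
    rw [hsplit]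
    calc |2 * X * D₁ + 2 * (κ * t) * Y ^ 2 - lam * (2 * Y * D₂)|
        ≤ |2 * X * D₁| + |2 * (κ * t) * Y ^ 2| + lam * |2 * Y * D₂| := by
          refine (abs_sub _ _).trans ?_
          rw [abs_mul lam, abs_of_pos hlam]
          gcongr
          exact abs_add_le _ _
      _ ≤ P * (X ^ 2 + Y ^ 2) + 2 * (|κ| * |t|) * (X ^ 2 + Y ^ 2) +
          lam * (Q * (X ^ 2 + Y ^ 2)) := by gcongr
      _ = m t * (X ^ 2 + Y ^ 2) := by
          simp only [hm, hP, hQ]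
          ring

end IsPlanarSolution

lemma IsModelSolution.planarEnergy_eq {p lam κ a : ℝ} {w : ℝ → ℝ} (hp : 1 < p)
    (h : IsModelSolution p lam κ a w) :
    planarEnergy (p - 1) lam w (fun t => sgnPow (p - 1) (deriv w t)) a = lam := by
  obtain ⟨-, -, -, hw, hd⟩ := h
  have hs : (p - 1)⁻¹ + 1 ≠ 0 := by
    have := inv_pos.2 (sub_pos.2 hp)
    positivity
  simp [planarEnergy, hw, hd, sgnPow_eq_zero_iff.2 rfl, Real.zero_rpow hs]

/-- **Continuous dependence of the model solution on the initial point.**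
Fix `1 < p < ∞`, `λ > 0`, `κ ≤ 0`, and let `W a` denote the solution of the model IVP
with initial point `a`. If `aₙ → a`, then `W aₙ → W a` and `(W aₙ)' → (W a)'`
uniformly on every compact subset of `ℝ`. -/
theorem modelSolution_continuous_dependence (p lam κ : ℝ)
    (hp : 1 < p) (hlam : 0 < lam) (hκ : κ ≤ 0)
    (W : ℝ → ℝ → ℝ) (hW : ∀ a : ℝ, IsModelSolution p lam κ a (W a))
    (aseq : ℕ → ℝ) (a : ℝ) (ha : Filter.Tendsto aseq Filter.atTop (nhds a)) :
    ∀ K : Set ℝ, IsCompact K →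
      TendstoUniformlyOn (fun n => W (aseq n)) (W a) Filter.atTop K ∧
      TendstoUniformlyOn (fun n => deriv (W (aseq n))) (deriv (W a)) Filter.atTop K := by
  have hs : 0 < p - 1 := sub_pos.2 hp
  have hplanar := fun b => (hW b).isPlanarSolution hp
  set U : ℝ → ℝ → ℝ := fun b t => sgnPow (p - 1) (deriv (W b) t) with hU
  have hderiv : ∀ b t, deriv (W b) t = sgnPow (p - 1)⁻¹ (U b t) := fun b t =>
    (sgnPow_inv_sgnPow hs _).symm
  have henergy : ∀ b, planarEnergy (p - 1) lam (W b) (U b) b = lam := fun b =>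
    (hW b).planarEnergy_eq hp
  intro K hK
  obtain ⟨R, hR⟩ := (hK.isBounded.union (Bornology.isBounded_singleton (x := a))).subset_closedBall 0
  rw [Real.closedBall_eq_Icc, zero_sub, zero_add] at hR
  have haR : a ∈ Icc (-R) R := hR (Or.inr rfl)
  set A : ℝ := -R - 1 with hA
  set B : ℝ := R + 1 with hB
  have hKI : K ⊆ Icc A B := fun x hx => by
    have := hR (Or.inl hx)
    exact ⟨by linarith [this.1], by linarith [this.2]⟩
  have haI : a ∈ Icc A B := ⟨by linarith [haR.1], by linarith [haR.2]⟩
  have hseq : ∀ᶠ n in atTop, aseq n ∈ Icc A B :=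
    ha.eventually (Icc_mem_nhds (by linarith [haR.1]) (by linarith [haR.2]))
  set L : ℝ := lam * Real.exp (∫ τ in A..B, (p - 1 + 1) / (p - 1) * |κ| * |τ|) with hL
  set M : ℝ := 1 + L / lam + L / (p - 1) with hM
  have hM0 : 0 ≤ M := by positivity
  have hbound : ∀ b ∈ Icc A B, ∀ t ∈ Icc A B, |W b t| ≤ M ∧ |U b t| ≤ M := fun b hb t ht => by
    refine IsPlanarSolution.abs_le_of_planarEnergy_le hs hlam ?_
    have := (hplanar b).planarEnergy_le hs hlam hb ht
    rwa [henergy b] at this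
  obtain ⟨C, hC⟩ := (hplanar a).exists_sq_add_sq_le hs hlam
    ((hplanar a).planarEnergy_pos hs hlam ((henergy a).symm ▸ hlam)) hM0 (hbound a haI)
  have hlim : Tendsto (fun n => ((W a (aseq n) - W (aseq n) (aseq n)) ^ 2 +
      (U a (aseq n) - U (aseq n) (aseq n)) ^ 2) * C) atTop (𝓝 0) := by
    have hWn : ∀ b, W b b = -1 := fun b => (hW b).2.2.2.1
    have hUn : ∀ b, U b b = 0 := fun b => sgnPow_eq_zero_iff.2 (hW b).2.2.2.2
    simp only [hWn, hUn]
    have k1 := ((hplanar a).continuous_fst.tendsto a).comp ha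
    have k2 := ((hplanar a).continuous_snd.tendsto a).comp ha
    change Tendsto _ _ (𝓝 (W a a)) at k1
    change Tendsto _ _ (𝓝 (U a a)) at k2
    rw [hWn] at k1
    rw [hUn] at k2
    simpa using ((((k1.sub_const (-1)).pow 2).add ((k2.sub_const 0).pow 2)).mul_const C)
  have hclose : ∀ ε > 0, ∀ᶠ n in atTop, aseq n ∈ Icc A B ∧ ∀ t ∈ Icc A B,
      |W a t - W (aseq n) t| < ε ∧ |U a t - U (aseq n) t| < ε := fun ε hε => by
    filter_upwards [hseq, hlim.eventually (gt_mem_nhds (pow_pos hε 2))] with n hn hsmall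
    refine ⟨hn, fun t ht => ?_⟩
    have hle := hC _ _ (hplanar (aseq n)) (hbound _ hn) _ hn t ht
    constructor
    · exact abs_lt_of_sq_lt_sq (by linarith [sq_nonneg (U a t - U (aseq n) t)]) hε.le
    · exact abs_lt_of_sq_lt_sq (by linarith [sq_nonneg (W a t - W (aseq n) t)]) hε.le
  constructor
  · rw [Metric.tendstoUniformlyOn_iff]
    intro ε hε
    filter_upwards [hclose ε hε] with n hn t ht
    exact (hn.2 t (hKI ht)).1
  · rw [Metric.tendstoUniformlyOn_iff]
    intro ε hε
    have huc := isCompact_Icc.uniformContinuousOn_of_continuous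
      (continuous_sgnPow (inv_pos.2 hs)).continuousOn (s := Icc (-M) M)
    obtain ⟨δ, hδ, hδε⟩ := Metric.uniformContinuousOn_iff.1 huc ε hε
    filter_upwards [hclose δ hδ] with n hn t ht
    rw [hderiv, hderiv]
    exact hδε _ (abs_le.1 (hbound a haI t (hKI ht)).2) _
      (abs_le.1 (hbound _ hn.1 t (hKI ht)).2) (hn.2 t (hKI ht)).2
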